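/- If the feasible set of the grid power minimization problem is nonempty, then the infimum of the grid energy Σ_{i=1}^N T_f·(p_i − p_{H,i}) over all feasible allocations is attained: there exists a feasible allocation (p*, p*_H) whose grid energy equals this infimum. -/

import Mathlib

/-!
Frames are indexed by `i ∈ {1, …, N}` (we use functions `ℕ → ℝ`, with only the
coordinates in `Finset.Icc 1 N` relevant).  The rate of frame `i` under power `p i`
is `Tf / 2 * logb 2 (1 + γ i * p i)`.
-/

/-- Rate of frame `i`. -/
noncomputable def rate (Tf : ℝ) (γ p : ℕ → ℝ) (i : ℕ) : ℝ :=
  Tf / 2 * Real.logb 2 (1 + γ i * p i)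

/-- `0 ≤ p_{H,i} ≤ p_i` for all frames. -/
def Alloc (N : ℕ) (p pH : ℕ → ℝ) : Prop :=
  ∀ i ∈ Finset.Icc 1 N, 0 ≤ pH i ∧ pH i ≤ p i

/-- Energy causality: `Σ_{i=1}^k T_f p_{H,i} ≤ Σ_{i=1}^k E_i` for `k = 1, …, N`. -/
def Causality (N : ℕ) (Tf : ℝ) (E pH : ℕ → ℝ) : Prop :=
  ∀ k ∈ Finset.Icc 1 N, ∑ i ∈ Finset.Icc 1 k, Tf * pH i ≤ ∑ i ∈ Finset.Icc 1 k, E i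

/-- Battery capacity: `Σ_{i=1}^{k+1} E_i − Σ_{i=1}^k T_f p_{H,i} ≤ E_max` for
`k = 1, …, N−1`. -/
def Capacity (N : ℕ) (Tf Emax : ℝ) (E pH : ℕ → ℝ) : Prop :=
  ∀ k ∈ Finset.Icc 1 (N - 1),
    (∑ i ∈ Finset.Icc 1 (k + 1), E i) - ∑ i ∈ Finset.Icc 1 k, Tf * pH i ≤ Emax

/-- Data constraints: `Σ_{i=k}^N rate_i ≥ Σ_{i=k}^N B_i` for `k = 1, …, N`. -/
def DataC (N : ℕ) (Tf : ℝ) (γ B p : ℕ → ℝ) : Prop :=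
  ∀ k ∈ Finset.Icc 1 N, ∑ i ∈ Finset.Icc k N, B i ≤ ∑ i ∈ Finset.Icc k N, rate Tf γ p i

/-- A feasible allocation for the grid power minimization problem. -/
def Feasible (N : ℕ) (Tf Emax : ℝ) (γ E B p pH : ℕ → ℝ) : Prop :=
  Alloc N p pH ∧ Causality N Tf E pH ∧ Capacity N Tf Emax E pH ∧ DataC N Tf γ B p

/-- Grid energy `Σ_{i=1}^N T_f (p_i − p_{H,i})` of an allocation. -/
def gridEnergy (N : ℕ) (Tf : ℝ) (p pH : ℕ → ℝ) : ℝ :=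
  ∑ i ∈ Finset.Icc 1 N, Tf * (p i - pH i)

/-!
Since the harvested energy is bounded by causality, a bound on the grid energy bounds every power
on the frames `1, …, N`. The coordinates off these frames affect neither feasibility nor energy, so
they may be set to zero. The competitors at least as good as a given feasible allocation thereby
reduce to a compact box. The feasible set is closed, because the rates are continuous at
nonnegative powers, and the continuous grid energy attains its minimum on the part inside the box.
-/

open Set

theorem exists_isMinOn_of_isCompact_of_forall_exists_le {X α : Type*} [TopologicalSpace X]
    [LinearOrder α] [TopologicalSpace α] [ClosedIicTopology α] {f : X → α} {s t : Set X} {x₀ : X}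
    (ht : IsCompact t) (hts : t ⊆ s) (hf : ContinuousOn f t) (hx₀ : x₀ ∈ s)
    (hdom : ∀ y ∈ s, f y ≤ f x₀ → ∃ z ∈ t, f z ≤ f y) :
    ∃ x ∈ s, IsMinOn f s x := by
  obtain ⟨z₀, hz₀, hz₀x₀⟩ := hdom x₀ hx₀ le_rfl
  obtain ⟨x, hxt, hmin⟩ := ht.exists_isMinOn ⟨z₀, hz₀⟩ hf
  refine ⟨x, hts hxt, fun y hy => ?_⟩
  rcases le_total (f y) (f x₀) with hyx₀ | hx₀y
  · obtain ⟨z, hz, hzy⟩ := hdom y hy hyx₀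
    exact (hmin hz).trans hzy
  · exact ((hmin hz₀).trans hz₀x₀).trans hx₀y

section Allocation

variable {N : ℕ} {Tf Emax : ℝ} {γ E B p pH q qH : ℕ → ℝ}

/-- The feasible set of the grid power minimization problem, as a set of pairs `(p, p_H)`. The
coordinates off the frames `1, …, N` are unconstrained. -/
def feasibleSet (N : ℕ) (Tf Emax : ℝ) (γ E B : ℕ → ℝ) : Set ((ℕ → ℝ) × (ℕ → ℝ)) :=
  {x | Feasible N Tf Emax γ E B x.1 x.2}

theorem Alloc.nonneg (h : Alloc N p pH) {i : ℕ} (hi : i ∈ Finset.Icc 1 N) : 0 ≤ p i :=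
  (h i hi).1.trans (h i hi).2

theorem Alloc.congr (h : Alloc N p pH) (hp : EqOn p q (Finset.Icc 1 N))
    (hpH : EqOn pH qH (Finset.Icc 1 N)) : Alloc N q qH := fun i hi => by
  rw [← hp hi, ← hpH hi]
  exact h i hi

theorem sum_mul_congr_of_eqOn (hpH : EqOn pH qH (Finset.Icc 1 N)) {k : ℕ} (hk : k ≤ N) :
    ∑ i ∈ Finset.Icc 1 k, Tf * pH i = ∑ i ∈ Finset.Icc 1 k, Tf * qH i :=
  Finset.sum_congr rfl fun _ hi => by rw [hpH (Finset.Icc_subset_Icc_right hk hi)]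

theorem Causality.congr (h : Causality N Tf E pH) (hpH : EqOn pH qH (Finset.Icc 1 N)) :
    Causality N Tf E qH := fun k hk => by
  rw [← sum_mul_congr_of_eqOn hpH (Finset.mem_Icc.1 hk).2]
  exact h k hk

theorem Capacity.congr (h : Capacity N Tf Emax E pH) (hpH : EqOn pH qH (Finset.Icc 1 N)) :
    Capacity N Tf Emax E qH := fun k hk => by
  rw [← sum_mul_congr_of_eqOn hpH ((Finset.mem_Icc.1 hk).2.trans (Nat.sub_le N 1))]
  exact h k hk

theorem DataC.congr (h : DataC N Tf γ B p) (hp : EqOn p q (Finset.Icc 1 N)) :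
    DataC N Tf γ B q := fun k hk => by
  refine (h k hk).trans_eq (Finset.sum_congr rfl fun i hi => ?_)
  rw [rate, rate, hp (Finset.Icc_subset_Icc_left (Finset.mem_Icc.1 hk).1 hi)]

theorem Feasible.congr (h : Feasible N Tf Emax γ E B p pH) (hp : EqOn p q (Finset.Icc 1 N))
    (hpH : EqOn pH qH (Finset.Icc 1 N)) : Feasible N Tf Emax γ E B q qH :=
  ⟨h.1.congr hp hpH, h.2.1.congr hpH, h.2.2.1.congr hpH, h.2.2.2.congr hp⟩

theorem gridEnergy_congr (hp : EqOn p q (Finset.Icc 1 N)) (hpH : EqOn pH qH (Finset.Icc 1 N)) :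
    gridEnergy N Tf p pH = gridEnergy N Tf q qH :=
  Finset.sum_congr rfl fun _ hi => by rw [hp hi, hpH hi]

theorem continuous_gridEnergy (N : ℕ) (Tf : ℝ) :
    Continuous fun x : (ℕ → ℝ) × (ℕ → ℝ) => gridEnergy N Tf x.1 x.2 := by
  unfold gridEnergy
  fun_prop

theorem gridEnergy_add_sum_harvested (N : ℕ) (Tf : ℝ) (p pH : ℕ → ℝ) :
    gridEnergy N Tf p pH + ∑ i ∈ Finset.Icc 1 N, Tf * pH i = ∑ i ∈ Finset.Icc 1 N, Tf * p i := by
  simp only [gridEnergy, mul_sub, Finset.sum_sub_distrib, sub_add_cancel]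

theorem Alloc.power_le (ha : Alloc N p pH) (hc : Causality N Tf E pH) (hTf : 0 < Tf) {i : ℕ}
    (hi : i ∈ Finset.Icc 1 N) :
    p i ≤ (gridEnergy N Tf p pH + ∑ j ∈ Finset.Icc 1 N, E j) / Tf := by
  have hN : N ∈ Finset.Icc 1 N := Finset.right_mem_Icc.2 (Finset.nonempty_Icc.1 ⟨i, hi⟩)
  rw [le_div_iff₀' hTf]
  calc Tf * p i
      ≤ ∑ j ∈ Finset.Icc 1 N, Tf * p j :=
        Finset.single_le_sum (fun j hj => mul_nonneg hTf.le (ha.nonneg hj)) hi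
    _ = gridEnergy N Tf p pH + ∑ j ∈ Finset.Icc 1 N, Tf * pH j :=
        (gridEnergy_add_sum_harvested N Tf p pH).symm
    _ ≤ gridEnergy N Tf p pH + ∑ j ∈ Finset.Icc 1 N, E j := add_le_add_right (hc N hN) _

theorem isClosed_setOf_alloc (N : ℕ) :
    IsClosed {x : (ℕ → ℝ) × (ℕ → ℝ) | Alloc N x.1 x.2} := by
  simp only [Alloc, ofPred_forall, ofPred_and]
  exact isClosed_biInter fun i _ =>
    (isClosed_le (by fun_prop) (by fun_prop)).inter (isClosed_le (by fun_prop) (by fun_prop))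

theorem isClosed_setOf_causality (N : ℕ) (Tf : ℝ) (E : ℕ → ℝ) :
    IsClosed {pH | Causality N Tf E pH} := by
  simp only [Causality, ofPred_forall]
  exact isClosed_biInter fun k _ => isClosed_le (by fun_prop) (by fun_prop)

theorem isClosed_setOf_capacity (N : ℕ) (Tf Emax : ℝ) (E : ℕ → ℝ) :
    IsClosed {pH | Capacity N Tf Emax E pH} := by
  simp only [Capacity, ofPred_forall]
  exact isClosed_biInter fun k _ => isClosed_le (by fun_prop) (by fun_prop)

theorem continuousOn_rate (Tf : ℝ) (γ : ℕ → ℝ) (i : ℕ) :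
    ContinuousOn (fun p => rate Tf γ p i) {p | 1 + γ i * p i ≠ 0} := by
  unfold rate Real.logb
  exact ((ContinuousOn.log (by fun_prop) fun _ hp => hp).div_const _).const_mul _

theorem isClosed_setOf_nonneg_and_dataC (Tf : ℝ) (B : ℕ → ℝ)
    (hγ : ∀ i ∈ Finset.Icc 1 N, 0 ≤ γ i) :
    IsClosed {p | (∀ i ∈ Finset.Icc 1 N, 0 ≤ p i) ∧ DataC N Tf γ B p} := by
  set P : Set (ℕ → ℝ) := {p | ∀ i ∈ Finset.Icc 1 N, 0 ≤ p i} with hP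
  have hPclosed : IsClosed P := by
    simp only [hP, ofPred_forall]
    exact isClosed_biInter fun i _ => isClosed_le (by fun_prop) (by fun_prop)
  have hrate : ∀ i ∈ Finset.Icc 1 N, ContinuousOn (fun p => rate Tf γ p i) P := fun i hi =>
    (continuousOn_rate Tf γ i).mono fun p hp =>
      (add_pos_of_pos_of_nonneg one_pos (mul_nonneg (hγ i hi) (hp i hi))).ne'
  have hsep : {p | p ∈ P ∧ DataC N Tf γ B p} = P ∩ ⋂ k ∈ Finset.Icc 1 N,
      {p ∈ P | ∑ i ∈ Finset.Icc k N, B i ≤ ∑ i ∈ Finset.Icc k N, rate Tf γ p i} := by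
    ext p
    simp +contextual [DataC]
  change IsClosed {p | p ∈ P ∧ DataC N Tf γ B p}
  rw [hsep]
  refine hPclosed.inter (isClosed_biInter fun k hk => ?_)
  exact hPclosed.isClosed_le continuousOn_const <| continuousOn_finsetSum _ fun i hi =>
    hrate i (Finset.Icc_subset_Icc_left (Finset.mem_Icc.1 hk).1 hi)

theorem isClosed_feasibleSet (Tf Emax : ℝ) (E B : ℕ → ℝ)
    (hγ : ∀ i ∈ Finset.Icc 1 N, 0 ≤ γ i) :
    IsClosed (feasibleSet N Tf Emax γ E B) := by
  have heq : feasibleSet N Tf Emax γ E B =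
      {x | Alloc N x.1 x.2} ∩ (Prod.snd ⁻¹' {pH | Causality N Tf E pH} ∩
        (Prod.snd ⁻¹' {pH | Capacity N Tf Emax E pH} ∩
          Prod.fst ⁻¹' {p | (∀ i ∈ Finset.Icc 1 N, 0 ≤ p i) ∧ DataC N Tf γ B p})) := by
    ext x
    exact and_congr_right fun ha => and_congr_right fun _ => and_congr_right fun _ =>
      (and_iff_right fun _ => ha.nonneg).symm
  rw [heq]
  exact (isClosed_setOf_alloc N).inter <|
    ((isClosed_setOf_causality N Tf E).preimage continuous_snd).inter <|
    ((isClosed_setOf_capacity N Tf Emax E).preimage continuous_snd).inter <|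
    (isClosed_setOf_nonneg_and_dataC Tf B hγ).preimage continuous_fst

/-- The allocations with all powers in `[0, M]` on the frames `1, …, N` and equal to zero off
them; the latter makes this box compact although allocations have infinitely many coordinates. -/
def powerBox (N : ℕ) (M : ℝ) : Set ((ℕ → ℝ) × (ℕ → ℝ)) :=
  Icc 0 (indicator (Finset.Icc 1 N) fun _ => M) ×ˢ Icc 0 (indicator (Finset.Icc 1 N) fun _ => M)

theorem isCompact_powerBox (N : ℕ) (M : ℝ) : IsCompact (powerBox N M) :=
  isCompact_Icc.prod isCompact_Icc

theorem Alloc.indicator_mem_powerBox (h : Alloc N p pH) {M : ℝ}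
    (hM : ∀ i ∈ Finset.Icc 1 N, p i ≤ M) :
    (indicator (Finset.Icc 1 N) p, indicator (Finset.Icc 1 N) pH) ∈ powerBox N M :=
  ⟨⟨indicator_nonneg fun _ => h.nonneg, fun i => indicator_le_indicator' (hM i)⟩,
    indicator_nonneg fun i hi => (h i hi).1,
    fun i => indicator_le_indicator' fun hi => (h i hi).2.trans (hM i hi)⟩

theorem exists_isMinOn_gridEnergy (hTf : 0 < Tf) (hγ : ∀ i ∈ Finset.Icc 1 N, 0 ≤ γ i)
    (hne : (feasibleSet N Tf Emax γ E B).Nonempty) :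
    ∃ x ∈ feasibleSet N Tf Emax γ E B,
      IsMinOn (fun x => gridEnergy N Tf x.1 x.2) (feasibleSet N Tf Emax γ E B) x := by
  obtain ⟨x₀, hx₀⟩ := hne
  set M := (gridEnergy N Tf x₀.1 x₀.2 + ∑ i ∈ Finset.Icc 1 N, E i) / Tf with hM
  have hcompact : IsCompact (powerBox N M ∩ feasibleSet N Tf Emax γ E B) :=
    (isCompact_powerBox N M).inter_right (isClosed_feasibleSet Tf Emax E B hγ)
  refine exists_isMinOn_of_isCompact_of_forall_exists_le hcompact inter_subset_right
    (continuous_gridEnergy N Tf).continuousOn hx₀ fun y hy hyx₀ => ?_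
  have hbound : ∀ i ∈ Finset.Icc 1 N, y.1 i ≤ M := fun i hi =>
    (hy.1.power_le hy.2.1 hTf hi).trans (by rw [hM]; gcongr)
  have hp : EqOn y.1 (indicator (Finset.Icc 1 N) y.1) (Finset.Icc 1 N) := eqOn_indicator.symm
  have hpH : EqOn y.2 (indicator (Finset.Icc 1 N) y.2) (Finset.Icc 1 N) := eqOn_indicator.symm
  exact ⟨_, ⟨hy.1.indicator_mem_powerBox hbound, hy.congr hp hpH⟩, (gridEnergy_congr hp hpH).ge⟩

end Allocation

/-- if the feasible set is nonempty, the infimum of the grid energy over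
feasible allocations is attained by some feasible allocation. -/
theorem statement_6
    (N : ℕ) (hN : 1 ≤ N) (Tf : ℝ) (hTf : 0 < Tf)
    (γ E B : ℕ → ℝ) (Emax : ℝ) (hEmax : 0 ≤ Emax)
    (hγ : ∀ i ∈ Finset.Icc 1 N, 0 < γ i)
    (hE : ∀ i ∈ Finset.Icc 1 N, 0 ≤ E i)
    (hB : ∀ i ∈ Finset.Icc 1 N, 0 ≤ B i)
    (hfeas : ∃ p pH : ℕ → ℝ, Feasible N Tf Emax γ E B p pH) :
    ∃ pstar pHstar : ℕ → ℝ, Feasible N Tf Emax γ E B pstar pHstar ∧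
      gridEnergy N Tf pstar pHstar =
        sInf {v : ℝ | ∃ p pH : ℕ → ℝ, Feasible N Tf Emax γ E B p pH ∧
          v = gridEnergy N Tf p pH} := by
  obtain ⟨p₀, pH₀, h₀⟩ := hfeas
  obtain ⟨⟨p, pH⟩, hfeasible, hmin⟩ := exists_isMinOn_gridEnergy hTf (fun i hi => (hγ i hi).le)
    ⟨(p₀, pH₀), h₀⟩
  refine ⟨p, pH, hfeasible, Eq.symm <| IsLeast.csInf_eq ⟨⟨p, pH, hfeasible, rfl⟩, ?_⟩⟩
  rintro _ ⟨q, qH, hq, rfl⟩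
  exact hmin (a := (q, qH)) hq
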